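/- arXiv:2510.10631 — 3 statements merged into one kernel-verified Lean document; each statement's English description precedes it below -/
import Mathlib

section
/- Let p, q > 1 be real numbers and define f : ℝ → ℝ by f(x) = x · (log(1 + x^p))^q. Then for every x > 0, the second derivative of f at x is strictly positive: f''(x) > 0; in particular f is strictly convex on (0, ∞). -/
open Real

/-- For `p, q > 1` and `f x = x * (log (1 + x^p))^q`, the second derivative of `f`
is strictly positive at every `x > 0`; in particular `f` is strictly convex on `(0, ∞)`. -/
theorem logpow_second_deriv_pos (p q : ℝ) (hp : 1 < p) (hq : 1 < q)
    (f : ℝ → ℝ) (hf : ∀ x : ℝ, f x = x * (Real.log (1 + x ^ p)) ^ q) :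
    (∀ x : ℝ, 0 < x → 0 < deriv (deriv f) x) ∧ StrictConvexOn ℝ (Set.Ioi (0 : ℝ)) f := by
  have hfe : f = fun x => x * (Real.log (1 + x ^ p)) ^ q := funext hf
  have hu : ∀ x : ℝ, 0 < x → 0 < x ^ p := fun x hx => Real.rpow_pos_of_pos hx p
  have hLpos : ∀ x : ℝ, 0 < x → 0 < Real.log (1 + x ^ p) := fun x hx =>
    Real.log_pos (by linarith [hu x hx])
  have hU : ∀ x : ℝ, 0 < x → HasDerivAt (fun x : ℝ => 1 + x ^ p) (p * x ^ (p - 1)) x :=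
    fun x hx => (Real.hasDerivAt_rpow_const (Or.inl hx.ne')).const_add 1
  have hL : ∀ x : ℝ, 0 < x →
      HasDerivAt (fun x : ℝ => Real.log (1 + x ^ p)) (p * x ^ (p - 1) / (1 + x ^ p)) x :=
    fun x hx => (hU x hx).log (by linarith [hu x hx])
  have hLr : ∀ r x : ℝ, 0 < x → HasDerivAt (fun x : ℝ => (Real.log (1 + x ^ p)) ^ r)
      (p * x ^ (p - 1) / (1 + x ^ p) * r * (Real.log (1 + x ^ p)) ^ (r - 1)) x :=
    fun r x hx => (hL x hx).rpow_const (Or.inl (hLpos x hx).ne')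
  have h1 : ∀ x : ℝ, 0 < x → HasDerivAt f ((Real.log (1 + x ^ p)) ^ q +
      p * q * ((Real.log (1 + x ^ p)) ^ (q - 1) * (1 - (1 + x ^ p)⁻¹))) x := by
    intro x hx
    rw [hfe]
    have h := (hasDerivAt_id x).mul (hLr q x hx)
    refine h.congr_deriv ?_
    have hne : 1 + x ^ p ≠ 0 := by linarith [hu x hx]
    have hxp : x * x ^ (p - 1) = x ^ p := by
      rw [Real.rpow_sub_one hx.ne']; field_simp
    have e : (1 : ℝ) - (1 + x ^ p)⁻¹ = x * x ^ (p - 1) / (1 + x ^ p) := by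
      rw [hxp]; field_simp; ring
    rw [e]
    simp only [id]
    ring
  have h2 : ∀ x : ℝ, 0 < x → 0 < deriv (deriv f) x := by
    intro x hx
    have hev : deriv f =ᶠ[nhds x] fun x => (Real.log (1 + x ^ p)) ^ q +
      p * q * ((Real.log (1 + x ^ p)) ^ (q - 1) * (1 - (1 + x ^ p)⁻¹)) := by
      filter_upwards [lt_mem_nhds hx] with y hy using (h1 y hy).deriv
    have hux := hu x hx
    have hne : 1 + x ^ p ≠ 0 := by linarith
    have hd := (hLr q x hx).add
      (((hLr (q - 1) x hx).mul (((hU x hx).inv hne).const_sub 1)).const_mul (p * q))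
    have hd' := hd.congr_of_eventuallyEq hev
    rw [hd'.deriv]
    have hl := hLpos x hx
    have a1 : 0 < Real.log (1 + x ^ p) ^ (q - 1) := Real.rpow_pos_of_pos hl _
    have a2 : 0 < Real.log (1 + x ^ p) ^ (q - 1 - 1) := Real.rpow_pos_of_pos hl _
    have a3 : 0 < x ^ (p - 1) := Real.rpow_pos_of_pos hx _
    have a4 : 0 < 1 - (1 + x ^ p)⁻¹ := by
      have : (1 + x ^ p)⁻¹ < 1 := inv_lt_one_of_one_lt₀ (by linarith)
      linarith
    have a5 : 0 < q - 1 := by linarith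
    have a6 : 0 < p := by linarith
    have a7 : 0 < q := by linarith
    have a8 : 0 < -(-(p * x ^ (p - 1)) / (1 + x ^ p) ^ 2) := by
      rw [neg_div, neg_neg]; positivity
    simp only [Pi.inv_apply]
    positivity
  refine ⟨h2, strictConvexOn_of_deriv2_pos (convex_Ioi 0) ?_ ?_⟩
  · intro x hx
    exact (h1 x hx).continuousAt.continuousWithinAt
  · intro x hx
    rw [interior_Ioi] at hx
    exact h2 x hx
end

section
/- Let p, q > 1 be real numbers and define f : ℝ → ℝ by f(x) = x · (log(1 + x^p))^q. Then the ratio f'(x) / (p · log x)^q tends to 1 as x → ∞. -/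
open Real Filter

/-- For `p, q > 1` and `f x = x * (log (1 + x^p))^q`, the ratio
`f'(x) / (p * log x)^q` tends to `1` as `x → ∞`. -/
theorem logpow_deriv_ratio_tendsto_one (p q : ℝ) (hp : 1 < p) (hq : 1 < q)
    (f : ℝ → ℝ) (hf : ∀ x : ℝ, f x = x * (Real.log (1 + x ^ p)) ^ q) :
    Filter.Tendsto (fun x : ℝ => deriv f x / (p * Real.log x) ^ q)
      Filter.atTop (nhds 1) := by
  have hp0 : 0 < p := by linarith
  have hfe : f = fun x => x * (Real.log (1 + x ^ p)) ^ q := funext hf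
  have hneg : Tendsto (fun x : ℝ => x ^ (-p)) atTop (nhds 0) :=
    tendsto_rpow_neg_atTop hp0
  have hone : Tendsto (fun x : ℝ => 1 + x ^ (-p)) atTop (nhds 1) := by
    simpa using hneg.const_add 1
  have hM : Tendsto (fun x : ℝ => p * Real.log x) atTop atTop :=
    Real.tendsto_log_atTop.const_mul_atTop hp0
  have hlog : Tendsto (fun x : ℝ => Real.log (1 + x ^ (-p))) atTop (nhds 0) := by
    simpa using hone.log one_ne_zero
  have hR : Tendsto (fun x : ℝ => 1 + Real.log (1 + x ^ (-p)) / (p * Real.log x))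
      atTop (nhds 1) := by
    simpa using (hlog.div_atTop hM).const_add 1
  have hRq : Tendsto (fun x : ℝ => (1 + Real.log (1 + x ^ (-p)) / (p * Real.log x)) ^ q)
      atTop (nhds 1) := by
    simpa using hR.rpow_const (p := q) (Or.inl one_ne_zero)
  have hL : Tendsto (fun x : ℝ => Real.log (1 + x ^ p)) atTop atTop :=
    Real.tendsto_log_atTop.comp (tendsto_atTop_add_const_left _ 1 (tendsto_rpow_atTop hp0))
  have hc : Tendsto (fun x : ℝ => q * p * (1 + x ^ (-p))⁻¹) atTop (nhds (q * p * 1⁻¹)) :=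
    (hone.inv₀ one_ne_zero).const_mul _
  have hS : Tendsto (fun x : ℝ => 1 + q * p * (1 + x ^ (-p))⁻¹ / Real.log (1 + x ^ p))
      atTop (nhds 1) := by
    simpa using (hc.div_atTop hL).const_add 1
  have hfin := hRq.mul hS
  rw [one_mul] at hfin
  refine hfin.congr' ?_
  filter_upwards [eventually_gt_atTop 1] with x hx
  have hx0 : 0 < x := by linarith
  have hlx : 0 < Real.log x := Real.log_pos hx
  have hxp : 0 < x ^ p := Real.rpow_pos_of_pos hx0 p
  have hL0 : 0 < Real.log (1 + x ^ p) := Real.log_pos (by linarith)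
  have hMx : 0 < p * Real.log x := by positivity
  have hd : HasDerivAt f (1 * (Real.log (1 + x ^ p)) ^ q +
      x * ((p * x ^ (p - 1)) / (1 + x ^ p) * q * (Real.log (1 + x ^ p)) ^ (q - 1))) x := by
    rw [hfe]
    have h1 : HasDerivAt (fun x : ℝ => 1 + x ^ p) (p * x ^ (p - 1)) x :=
      (Real.hasDerivAt_rpow_const (Or.inl hx0.ne')).const_add 1
    have h2 := (h1.log (by positivity)).rpow_const (p := q) (Or.inl hL0.ne')
    exact (hasDerivAt_id x).mul h2
  have hinv : x ^ (-p) = (x ^ p)⁻¹ := Real.rpow_neg hx0.le p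
  have hratio : 1 + Real.log (1 + x ^ (-p)) / (p * Real.log x)
      = Real.log (1 + x ^ p) / (p * Real.log x) := by
    have : 1 + x ^ p = x ^ p * (1 + x ^ (-p)) := by
      rw [hinv]; field_simp; ring
    rw [this, Real.log_mul hxp.ne' (by rw [hinv]; positivity), Real.log_rpow hx0]
    field_simp
  have hMq : 0 < (p * Real.log x) ^ q := Real.rpow_pos_of_pos hMx q
  rw [hd.deriv, hratio, Real.div_rpow hL0.le hMx.le, Real.rpow_sub_one hL0.ne',
    Real.rpow_sub_one hx0.ne', hinv]
  field_simp
  try ring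
end

section
/- Define h : ℝ → ℝ by h(x) = log(x + 1) − (x / (x + 1)) · log x. Then h is strictly decreasing on the interval (1, ∞): for all x, y with 1 < x < y, h(y) < h(x). -/
open Real

/-- The function `h x = log (x + 1) - (x / (x + 1)) * log x` is strictly decreasing on
`(1, ∞)`: for all `x, y` with `1 < x < y`, `h y < h x`. -/
theorem entropy_ratio_strictAnti (h : ℝ → ℝ)
    (hh : ∀ x : ℝ, h x = Real.log (x + 1) - (x / (x + 1)) * Real.log x) :
    ∀ x y : ℝ, 1 < x → x < y → h y < h x := by
  have key : ∀ x : ℝ, 1 < x → HasDerivAt h (-(Real.log x / (x + 1) ^ 2)) x := by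
    intro x hx
    have e : h = fun x => Real.log (x + 1) - (x / (x + 1)) * Real.log x := funext hh
    rw [e]
    have h0 : x ≠ 0 := by linarith
    have h1 : x + 1 ≠ 0 := by linarith
    have d1 : HasDerivAt (fun x : ℝ => x + 1) 1 x := (hasDerivAt_id x).add_const 1
    have d2 := (d1.log h1).sub
      (((hasDerivAt_id x).div d1 h1).mul (Real.hasDerivAt_log h0))
    refine d2.congr_deriv ?_
    simp only [id, Pi.div_apply]
    field_simp
    ring
  have anti : StrictAntiOn h (Set.Ioi 1) := by
    apply strictAntiOn_of_deriv_neg (convex_Ioi 1)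
    · intro x hx
      exact (key x hx).continuousAt.continuousWithinAt
    · intro x hx
      rw [interior_Ioi] at hx
      have hx1 : 1 < x := hx
      rw [(key x hx1).deriv]
      have := Real.log_pos hx1
      have h2 : 0 < x + 1 := by linarith
      have : 0 < Real.log x / (x + 1) ^ 2 := by positivity
      linarith
  intro x y hx hxy
  exact anti hx (lt_trans hx hxy) hxy
end
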